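/- Let k be a field, and let φ: k[x₁,…,x₇] → k[ℤ⁴] be the k-algebra homomorphism from the polynomial ring in seven variables to the group algebra of ℤ⁴ over k sending xᵢ to the basis element χ^{hᵢ} for 1 ≤ i ≤ 7. Then the kernel of φ is the ideal generated by the six binomials x₁x₆ − x₃x₅, x₄x₆ − x₂x₇, x₇² − x₂x₄x₅, x₆x₇ − x₂²x₅, x₃x₇ − x₁x₂², and x₃x₄x₅ − x₁x₂x₇. -/

import Mathlib

/-!
Two monomials have the same image in `k[ℤ⁴]` exactly when their exponent vectors have the same
degree `∑ aᵢ hᵢ`, so the kernel is the binomial ideal of the equal-degree congruence on `ℕ⁷`.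
To see that the six relations generate this congruence, orient them as rewriting rules that
decrease an `ℕ`-valued weight: every exponent vector then rewrites to one that lies above no
left-hand side, and the degree separates these standard vectors.
-/

open MvPolynomial

/-- The seven lattice points `h₁, …, h₇` (0-indexed as `h 0, …, h 6`). -/
def h : Fin 7 → (Fin 4 → ℤ) :=
  ![![1,0,0,0], ![0,1,0,0], ![0,0,1,0], ![0,0,0,1],
    ![2,3,-2,-1], ![1,3,-1,-1], ![1,2,-1,0]]

section ToricIdeal

variable {σ A k : Type*} [AddCommMonoid A]

lemma aeval_of'_monomial [CommSemiring k] (d : σ → A) (a : σ →₀ ℕ) (c : k) :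
    aeval (fun i => AddMonoidAlgebra.of' k A (d i)) (monomial a c) =
      AddMonoidAlgebra.single (Finsupp.weight d a) c := by
  simp [aeval_monomial, Finsupp.weight_apply, Finsupp.prod, Finsupp.sum]

lemma aeval_of'_monomial_sub_monomial_eq_zero [CommRing k] {d : σ → A} {a b : σ →₀ ℕ}
    (hab : Finsupp.weight d a = Finsupp.weight d b) :
    aeval (fun i => AddMonoidAlgebra.of' k A (d i)) (monomial a (1 : k) - monomial b 1) = 0 := by
  rw [map_sub, aeval_of'_monomial, aeval_of'_monomial, hab, sub_self]

lemma ker_aeval_of'_le [CommRing k] {d : σ → A} {I : Ideal (MvPolynomial σ k)}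
    (hI : ∀ a b, Finsupp.weight d a = Finsupp.weight d b → monomial a 1 - monomial b 1 ∈ I) :
    RingHom.ker (aeval fun i => AddMonoidAlgebra.of' k A (d i)) ≤ I := by
  let φ : MvPolynomial σ k →ₐ[k] AddMonoidAlgebra k A :=
    aeval fun i => AddMonoidAlgebra.of' k A (d i)
  -- `ψ` lifts `χ^u` to the class of any monomial of degree `u`, so that `ψ ∘ φ` is reduction
  -- modulo `I`.
  let ψ : AddMonoidAlgebra k A →ₗ[k] MvPolynomial σ k ⧸ I :=
    Finsupp.linearCombination k
        (fun u => Ideal.Quotient.mk I (monomial (Function.invFun (Finsupp.weight d) u) 1)) ∘ₗ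
      (AddMonoidAlgebra.coeffLinearEquiv k).toLinearMap
  have hψφ : ψ ∘ₗ φ.toLinearMap = (Ideal.Quotient.mkₐ k I).toLinearMap := by
    refine (basisMonomials σ k).ext fun a => ?_
    have hφ : φ (monomial a 1) = AddMonoidAlgebra.single (Finsupp.weight d a) 1 :=
      aeval_of'_monomial d a 1
    simpa [hφ, ψ] using
      Ideal.Quotient.eq.mpr (hI _ _ (Function.invFun_eq (f := Finsupp.weight d) ⟨a, rfl⟩))
  intro p hp
  have hφp : φ p = 0 := hp
  rw [← Ideal.Quotient.eq_zero_iff_mem]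
  simpa [hφp] using (LinearMap.congr_fun hψφ p).symm

end ToricIdeal

section BinomialIdeal

variable {σ : Type*} (k : Type*) [CommRing k]

/-- The ideal generated by the binomials `x ^ a - x ^ b` attached to the pairs `(a, b)` of
exponent vectors in `S`. -/
noncomputable def binomialIdeal (S : Set ((σ →₀ ℕ) × (σ →₀ ℕ))) : Ideal (MvPolynomial σ k) :=
  Ideal.span ((fun p => monomial p.1 1 - monomial p.2 1) '' S)

variable {S : Set ((σ →₀ ℕ) × (σ →₀ ℕ))}

lemma monomial_sub_monomial_mem_binomialIdeal {a b : σ →₀ ℕ}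
    (hab : addConGen (fun l t => (l, t) ∈ S) a b) :
    monomial a 1 - monomial b 1 ∈ binomialIdeal k S := by
  induction (show AddConGen.Rel _ a b from hab) with
  | of a b hS => exact Ideal.subset_span ⟨(a, b), hS, rfl⟩
  | refl a => simp
  | symm _ ih => exact sub_mem_comm_iff.mp (ih ‹_›)
  | trans _ _ ih₁ ih₂ => simpa using add_mem (ih₁ ‹_›) (ih₂ ‹_›)
  | add _ _ ih₁ ih₂ =>
    simpa [monomial_mul] using Ideal.mul_sub_mul_mem _ (ih₁ ‹_›) (ih₂ ‹_›)

theorem ker_aeval_of'_eq_binomialIdeal {A : Type*} [AddCommMonoid A] {d : σ → A}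
    (hS : addConGen (fun a b => (a, b) ∈ S) = AddCon.ker (Finsupp.weight d)) :
    RingHom.ker (aeval fun i => AddMonoidAlgebra.of' k A (d i)) = binomialIdeal k S := by
  apply le_antisymm
  · refine ker_aeval_of'_le fun a b hab => monomial_sub_monomial_mem_binomialIdeal k ?_
    rw [hS]
    exact hab
  · rw [binomialIdeal, Ideal.span_le]
    rintro _ ⟨⟨a, b⟩, hab, rfl⟩
    have hker : AddCon.ker (Finsupp.weight d) a b := hS ▸ AddConGen.Rel.of a b hab
    exact aeval_of'_monomial_sub_monomial_eq_zero hker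

end BinomialIdeal

section Rewriting

/-- An element of an ordered monoid is standard for a set `S` of rewriting rules `l ↦ t` if it is
irreducible, that is, if it lies above no left-hand side `l`. For exponent vectors these are the
standard monomials of Gröbner basis theory. -/
def IsStandard {M : Type*} [LE M] (S : Set (M × M)) (a : M) : Prop :=
  ∀ p ∈ S, ¬ p.1 ≤ a

variable {M Γ : Type*} [AddCommMonoid M] [LE M] [ExistsAddOfLE M] {S : Set (M × M)}
  [AddCommMonoid Γ] [LT Γ] [AddRightStrictMono Γ] [WellFoundedLT Γ]

lemma exists_isStandard_addConGen (ρ : M →+ Γ) (hρ : ∀ p ∈ S, ρ p.2 < ρ p.1) (a : M) :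
    ∃ b, IsStandard S b ∧ addConGen (fun l t => (l, t) ∈ S) a b := by
  induction a using (InvImage.wf ρ (wellFounded_lt (α := Γ))).induction with
  | _ a ih =>
    by_cases ha : IsStandard S a
    · exact ⟨a, ha, AddCon.refl _ a⟩
    obtain ⟨⟨l, t⟩, hlt, hla⟩ : ∃ p ∈ S, p.1 ≤ a := by simpa [IsStandard] using ha
    obtain ⟨c, rfl⟩ := exists_add_of_le hla
    have hdecr : ρ (t + c) < ρ (l + c) := by
      simpa only [map_add] using add_lt_add_left (hρ _ hlt) (ρ c)
    have hstep : addConGen (fun l t => (l, t) ∈ S) (l + c) (t + c) :=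
      AddCon.add _ (AddConGen.Rel.of l t hlt) (AddCon.refl _ c)
    obtain ⟨b, hb, htb⟩ := ih _ hdecr
    exact ⟨b, hb, AddCon.trans _ hstep htb⟩

theorem addConGen_eq_ker_of_injOn_isStandard {N : Type*} [AddCommMonoid N] (f : M →+ N)
    (ρ : M →+ Γ) (hf : ∀ p ∈ S, f p.1 = f p.2) (hρ : ∀ p ∈ S, ρ p.2 < ρ p.1)
    (hinj : Set.InjOn f {a | IsStandard S a}) :
    addConGen (fun a b => (a, b) ∈ S) = AddCon.ker f := by
  have hle : addConGen (fun a b => (a, b) ∈ S) ≤ AddCon.ker f :=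
    AddCon.addConGen_le.mpr fun a b hab => hf (a, b) hab
  refine le_antisymm hle fun a b hab => ?_
  obtain ⟨a', ha', haa'⟩ := exists_isStandard_addConGen ρ hρ a
  obtain ⟨b', hb', hbb'⟩ := exists_isStandard_addConGen ρ hρ b
  have hfab : f a' = f b' := calc
    f a' = f a := (hle haa').symm
    _ = f b := hab
    _ = f b' := hle hbb'
  obtain rfl : a' = b' := hinj ha' hb' hfab
  exact AddCon.trans _ haa' (AddCon.symm _ hbb')

end Rewriting

section SevenPoints

open Finsupp (single weight)

/-- The exponent vectors of the six binomials, each oriented as a rewriting rule from the first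
monomial to the second. -/
noncomputable def rewritingRules : Set ((Fin 7 →₀ ℕ) × (Fin 7 →₀ ℕ)) :=
  {(single 0 1 + single 5 1, single 2 1 + single 4 1),
    (single 3 1 + single 5 1, single 1 1 + single 6 1),
    (single 6 2, single 1 1 + single 3 1 + single 4 1),
    (single 5 1 + single 6 1, single 1 2 + single 4 1),
    (single 2 1 + single 6 1, single 0 1 + single 1 2),
    (single 2 1 + single 3 1 + single 4 1, single 0 1 + single 1 1 + single 6 1)}

lemma weight_h (a : Fin 7 →₀ ℕ) :
    weight h a = (![a 0 + 2 * a 4 + a 5 + a 6, a 1 + 3 * a 4 + 3 * a 5 + 2 * a 6,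
      a 2 - 2 * a 4 - a 5 - a 6, a 3 - a 4 - a 5] : Fin 4 → ℤ) := by
  ext i
  fin_cases i <;>
    simp [Finsupp.weight_eq_sum, Fin.sum_univ_seven, h, mul_comm, sub_eq_add_neg]

lemma weight_h_eq_weight_h_iff {a b : Fin 7 →₀ ℕ} :
    weight h a = weight h b ↔
      (a 0 + 2 * a 4 + a 5 + a 6 : ℤ) = b 0 + 2 * b 4 + b 5 + b 6 ∧
      (a 1 + 3 * a 4 + 3 * a 5 + 2 * a 6 : ℤ) = b 1 + 3 * b 4 + 3 * b 5 + 2 * b 6 ∧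
      (a 2 - 2 * a 4 - a 5 - a 6 : ℤ) = b 2 - 2 * b 4 - b 5 - b 6 ∧
      (a 3 - a 4 - a 5 : ℤ) = b 3 - b 4 - b 5 := by
  simp [weight_h, Matrix.vecCons_inj]

lemma weight_h_eq_of_mem_rewritingRules :
    ∀ p ∈ rewritingRules, weight h p.1 = weight h p.2 := by
  simp only [rewritingRules, Set.forall_mem_insert, Set.mem_singleton_iff, forall_eq, map_add,
    Finsupp.weight_single]
  decide

lemma weight_snd_lt_weight_fst_of_mem_rewritingRules :
    ∀ p ∈ rewritingRules,
      weight ![1, 0, 1, 3, 0, 1, 2] p.2 < (weight ![1, 0, 1, 3, 0, 1, 2] p.1 : ℕ) := by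
  simp [rewritingRules, Finsupp.weight_single]

lemma isStandard_rewritingRules_iff {a : Fin 7 →₀ ℕ} :
    IsStandard rewritingRules a ↔ (a 0 = 0 ∨ a 5 = 0) ∧ (a 3 = 0 ∨ a 5 = 0) ∧ a 6 ≤ 1 ∧
      (a 5 = 0 ∨ a 6 = 0) ∧ (a 2 = 0 ∨ a 6 = 0) ∧ (a 2 = 0 ∨ a 3 = 0 ∨ a 4 = 0) := by
  simp only [IsStandard, rewritingRules, Set.forall_mem_insert, Set.mem_singleton_iff, forall_eq]
  simp [Finsupp.le_def, Fin.forall_fin_succ, Nat.one_le_iff_ne_zero, or_iff_not_imp_left]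

variable {a b : Fin 7 →₀ ℕ}

lemma IsStandard.apply_five_le (ha : IsStandard rewritingRules a)
    (hab : weight h a = weight h b) : a 5 ≤ b 5 := by
  obtain ⟨ha05, ha35, -, ha56, -⟩ := isStandard_rewritingRules_iff.mp ha
  obtain ⟨hdeg0, -, -, hdeg3⟩ := weight_h_eq_weight_h_iff.mp hab
  by_contra! hlt
  have ha5 : a 5 ≠ 0 := Nat.ne_zero_of_lt hlt
  have hinvariant : (a 0 + 2 * a 3 + a 6 - a 5 : ℤ) = b 0 + 2 * b 3 + b 6 - b 5 := by
    linear_combination hdeg0 + 2 * hdeg3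
  rw [ha05.resolve_right ha5, ha35.resolve_right ha5, ha56.resolve_left ha5] at hinvariant
  omega

lemma IsStandard.apply_two_le (hb : IsStandard rewritingRules b)
    (hab : weight h a = weight h b) (h5 : a 5 = b 5) : b 2 ≤ a 2 := by
  obtain ⟨-, -, -, -, hb26, hb234⟩ := isStandard_rewritingRules_iff.mp hb
  obtain ⟨-, -, hdeg2, hdeg3⟩ := weight_h_eq_weight_h_iff.mp hab
  by_contra! hlt2
  have hb6 : b 6 = 0 := hb26.resolve_left (Nat.ne_zero_of_lt hlt2)
  have hlt4 : a 4 < b 4 := by omega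
  have hlt3 : a 3 < b 3 := by omega
  exact hb234.elim (Nat.ne_zero_of_lt hlt2)
    (·.elim (Nat.ne_zero_of_lt hlt3) (Nat.ne_zero_of_lt hlt4))

lemma injOn_weight_h : Set.InjOn (weight h) {a | IsStandard rewritingRules a} := by
  intro a ha b hb hab
  have h5 : a 5 = b 5 := (ha.apply_five_le hab).antisymm (hb.apply_five_le hab.symm)
  have h2 : a 2 = b 2 :=
    (ha.apply_two_le hab.symm h5.symm).antisymm (hb.apply_two_le hab h5)
  obtain ⟨-, -, ha6, -⟩ := isStandard_rewritingRules_iff.mp ha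
  obtain ⟨-, -, hb6, -⟩ := isStandard_rewritingRules_iff.mp hb
  obtain ⟨hdeg0, hdeg1, hdeg2, hdeg3⟩ := weight_h_eq_weight_h_iff.mp hab
  -- `hdeg2` now reads `2 * a 4 + a 6 = 2 * b 4 + b 6`, a division by two with remainder.
  have h46 : a 4 = b 4 ∧ a 6 = b 6 := by omega
  ext i
  fin_cases i <;> simp only [Fin.reduceFinMk] <;> omega

theorem addConGen_rewritingRules :
    addConGen (fun a b => (a, b) ∈ rewritingRules) = AddCon.ker (weight h) :=
  addConGen_eq_ker_of_injOn_isStandard (weight h) (weight ![1, 0, 1, 3, 0, 1, 2])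
    weight_h_eq_of_mem_rewritingRules weight_snd_lt_weight_fst_of_mem_rewritingRules
    injOn_weight_h

end SevenPoints

theorem stmt_19_general (k : Type*) [CommRing k] :
    RingHom.ker (aeval (fun i => AddMonoidAlgebra.of' k (Fin 4 → ℤ) (h i)) :
        MvPolynomial (Fin 7) k →ₐ[k] AddMonoidAlgebra k (Fin 4 → ℤ)) =
      Ideal.span {X 0 * X 5 - X 2 * X 4,
                  X 3 * X 5 - X 1 * X 6,
                  X 6 ^ 2 - X 1 * X 3 * X 4,
                  X 5 * X 6 - X 1 ^ 2 * X 4,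
                  X 2 * X 6 - X 0 * X 1 ^ 2,
                  X 2 * X 3 * X 4 - X 0 * X 1 * X 6} := by
  rw [ker_aeval_of'_eq_binomialIdeal k addConGen_rewritingRules]
  simp only [binomialIdeal, rewritingRules, Set.image_insert_eq, Set.image_singleton,
    X, monomial_pow, monomial_mul, Finsupp.smul_single, smul_eq_mul, mul_one, one_pow]

/-- The kernel of the `k`-algebra map `k[x₁,…,x₇] → k[ℤ⁴]`, `xᵢ ↦ χ^{hᵢ}`, is generated
by the six binomials `x₁x₆−x₃x₅`, `x₄x₆−x₂x₇`, `x₇²−x₂x₄x₅`, `x₆x₇−x₂²x₅`, `x₃x₇−x₁x₂²`,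
`x₃x₄x₅−x₁x₂x₇`. -/
theorem stmt_19 (k : Type*) [Field k] :
    RingHom.ker ((MvPolynomial.aeval
        (fun i : Fin 7 => AddMonoidAlgebra.of' k (Fin 4 → ℤ) (h i)) :
        MvPolynomial (Fin 7) k →ₐ[k] AddMonoidAlgebra k (Fin 4 → ℤ)) : MvPolynomial (Fin 7) k →+* AddMonoidAlgebra k (Fin 4 → ℤ)) =
      Ideal.span {X 0 * X 5 - X 2 * X 4,
                  X 3 * X 5 - X 1 * X 6,
                  X 6 ^ 2 - X 1 * X 3 * X 4,
                  X 5 * X 6 - X 1 ^ 2 * X 4,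
                  X 2 * X 6 - X 0 * X 1 ^ 2,
                  X 2 * X 3 * X 4 - X 0 * X 1 * X 6} :=
  stmt_19_general k
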